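/- Noninterference for CG: Suppose ℓi ⋢ ℓ in the security lattice, x : Labeled ℓi τ ⊢ e : CG ℓ1 ℓ (bool) is derivable in CG for some pc-label ℓ1, and v1, v2 are closed CG values of type Labeled ℓi τ. If both e[v1/x] and e[v2/x], executed under the forcing semantics from the empty heap, terminate, then they produce the same boolean value. -/

import Mathlib

/-! The proof is a syntactic simulation argument between the two runs.

Typing is generalized to pairs of expressions (`CGNI.Rel`): the two components have the same shape,
except that under a `label` whose security label is not below the observer level they may be
arbitrary well-typed closed values. Locations are matched by a partial bijection, because
computations with an unobservable pc-label may allocate differently in the two runs. The diagonal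
of the same judgment types a single run, so substitution and preservation under pure evaluation
(`CGNI.Rel.subst`, `CGNI.Rel.pure`) are proved once for both purposes. Pure code has no eliminator
for `Labeled`, hence both runs evaluate it in lockstep.

For forcing, `CGNI.force_unary` shows preservation and confinement for one run: a computation with
pc-label `l1` only touches old locations labeled above `l1`. `CGNI.force_binary` shows that two runs
of related computations keep the heaps related and give results related up to the taint label. The
essential case is `bind`: if the first computation is tainted below the observer, its results are
related and the runs stay in lockstep; otherwise the continuation has an unobservable pc-label and
confinement, applied to each run separately, keeps the heaps related, while the final taint is
unobservable as well, so that nothing is claimed of the results beyond typing. Starting from empty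
heaps and two arguments that are related because `¬ li ≤ l`, the final results are related at type
`bool` with taint `l`, hence equal. -/

/-! ## Shared expression syntax for the FG and CG calculi (de Bruijn indices) -/

inductive Exp : Type where
  | var (n : ℕ)
  | lam (e : Exp)
  | app (e1 e2 : Exp)
  | pair (e1 e2 : Exp)
  | fst (e : Exp)
  | snd (e : Exp)
  | inl (e : Exp)
  | inr (e : Exp)
  | case (e e1 e2 : Exp)      -- the two branches each bind one variable
  | tt
  | ff
  | unit
  | loc (n : ℕ)
  | new (e : Exp)
  | deref (e : Exp)
  | assign (e1 e2 : Exp)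
  | label (e : Exp)
  | unlabel (e : Exp)
  | toLabeled (e : Exp)
  | ret (e : Exp)
  | bind (e1 e2 : Exp)        -- e2 binds one variable
deriving DecidableEq

namespace Exp

/-- Shift free de Bruijn indices `≥ c` up by one. -/
def shift (c : ℕ) : Exp → Exp
  | var n => if n < c then var n else var (n + 1)
  | lam e => lam (e.shift (c + 1))
  | app e1 e2 => app (e1.shift c) (e2.shift c)
  | pair e1 e2 => pair (e1.shift c) (e2.shift c)
  | fst e => fst (e.shift c)
  | snd e => snd (e.shift c)
  | inl e => inl (e.shift c)
  | inr e => inr (e.shift c)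
  | case e e1 e2 => case (e.shift c) (e1.shift (c + 1)) (e2.shift (c + 1))
  | tt => tt
  | ff => ff
  | unit => unit
  | loc n => loc n
  | new e => new (e.shift c)
  | deref e => deref (e.shift c)
  | assign e1 e2 => assign (e1.shift c) (e2.shift c)
  | label e => label (e.shift c)
  | unlabel e => unlabel (e.shift c)
  | toLabeled e => toLabeled (e.shift c)
  | ret e => ret (e.shift c)
  | bind e1 e2 => bind (e1.shift c) (e2.shift (c + 1))

/-- Substitution `e[v/k]` of `v` for de Bruijn index `k` in `e`. -/
def subst : Exp → Exp → ℕ → Exp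
  | var n, v, k => if n = k then v else if k < n then var (n - 1) else var n
  | lam e, v, k => lam (e.subst (v.shift 0) (k + 1))
  | app e1 e2, v, k => app (e1.subst v k) (e2.subst v k)
  | pair e1 e2, v, k => pair (e1.subst v k) (e2.subst v k)
  | fst e, v, k => fst (e.subst v k)
  | snd e, v, k => snd (e.subst v k)
  | inl e, v, k => inl (e.subst v k)
  | inr e, v, k => inr (e.subst v k)
  | case e e1 e2, v, k =>
      case (e.subst v k) (e1.subst (v.shift 0) (k + 1)) (e2.subst (v.shift 0) (k + 1))
  | tt, _, _ => tt
  | ff, _, _ => ff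
  | unit, _, _ => unit
  | loc n, _, _ => loc n
  | new e, v, k => new (e.subst v k)
  | deref e, v, k => deref (e.subst v k)
  | assign e1 e2, v, k => assign (e1.subst v k) (e2.subst v k)
  | label e, v, k => label (e.subst v k)
  | unlabel e, v, k => unlabel (e.subst v k)
  | toLabeled e, v, k => toLabeled (e.subst v k)
  | ret e, v, k => ret (e.subst v k)
  | bind e1 e2, v, k => bind (e1.subst v k) (e2.subst (v.shift 0) (k + 1))

end Exp

/-- Heaps: locations are list indices; allocation appends. -/
abbrev Heap := List Exp

/-! ## Values -/

/-- Values of the FG language. -/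
inductive FGVal : Exp → Prop where
  | lam : FGVal (.lam e)
  | pair : FGVal v1 → FGVal v2 → FGVal (.pair v1 v2)
  | inl : FGVal v → FGVal (.inl v)
  | inr : FGVal v → FGVal (.inr v)
  | tt : FGVal .tt
  | ff : FGVal .ff
  | unit : FGVal .unit
  | loc : FGVal (.loc n)

/-- Values of the CG language (monadic expressions are suspended computations,
hence values; labeled values are values). -/
inductive CGVal : Exp → Prop where
  | lam : CGVal (.lam e)
  | pair : CGVal v1 → CGVal v2 → CGVal (.pair v1 v2)
  | inl : CGVal v → CGVal (.inl v)
  | inr : CGVal v → CGVal (.inr v)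
  | tt : CGVal .tt
  | ff : CGVal .ff
  | unit : CGVal .unit
  | loc : CGVal (.loc n)
  | label : CGVal v → CGVal (.label v)
  | ret : CGVal (.ret e)
  | bind : CGVal (.bind e1 e2)
  | unlabel : CGVal (.unlabel e)
  | toLabeled : CGVal (.toLabeled e)
  | new : CGVal (.new e)
  | deref : CGVal (.deref e)
  | assign : CGVal (.assign e1 e2)

/-! ## FG: deterministic big-step call-by-value evaluation over heaps -/

inductive FGEval : Heap → Exp → Heap → Exp → Prop where
  | lam : FGEval h (.lam e) h (.lam e)
  | tt : FGEval h .tt h .tt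
  | ff : FGEval h .ff h .ff
  | unit : FGEval h .unit h .unit
  | loc : FGEval h (.loc n) h (.loc n)
  | app : FGEval h e1 h1 (.lam e) → FGEval h1 e2 h2 v2 →
      FGEval h2 (e.subst v2 0) h3 v → FGEval h (.app e1 e2) h3 v
  | pair : FGEval h e1 h1 v1 → FGEval h1 e2 h2 v2 →
      FGEval h (.pair e1 e2) h2 (.pair v1 v2)
  | fst : FGEval h e h1 (.pair v1 v2) → FGEval h (.fst e) h1 v1
  | snd : FGEval h e h1 (.pair v1 v2) → FGEval h (.snd e) h1 v2
  | inl : FGEval h e h1 v → FGEval h (.inl e) h1 (.inl v)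
  | inr : FGEval h e h1 v → FGEval h (.inr e) h1 (.inr v)
  | caseL : FGEval h e h1 (.inl v) → FGEval h1 (e1.subst v 0) h2 w →
      FGEval h (.case e e1 e2) h2 w
  | caseR : FGEval h e h1 (.inr v) → FGEval h1 (e2.subst v 0) h2 w →
      FGEval h (.case e e1 e2) h2 w
  | new : FGEval h e h1 v → FGEval h (.new e) (h1 ++ [v]) (.loc h1.length)
  | deref : FGEval h e h1 (.loc n) → h1[n]? = some v → FGEval h (.deref e) h1 v
  | assign : FGEval h e1 h1 (.loc n) → FGEval h1 e2 h2 v →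
      FGEval h (.assign e1 e2) (h2.set n v) .unit

/-! ## CG: pure big-step evaluation (no heap) and forcing semantics over heaps -/

/-- Pure (heap-free) big-step evaluation for CG.  Monadic expressions are
suspended computations and evaluate to themselves. -/
inductive CGPure : Exp → Exp → Prop where
  | lam : CGPure (.lam e) (.lam e)
  | tt : CGPure .tt .tt
  | ff : CGPure .ff .ff
  | unit : CGPure .unit .unit
  | loc : CGPure (.loc n) (.loc n)
  | app : CGPure e1 (.lam e) → CGPure e2 v2 → CGPure (e.subst v2 0) v →
      CGPure (.app e1 e2) v
  | pair : CGPure e1 v1 → CGPure e2 v2 → CGPure (.pair e1 e2) (.pair v1 v2)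
  | fst : CGPure e (.pair v1 v2) → CGPure (.fst e) v1
  | snd : CGPure e (.pair v1 v2) → CGPure (.snd e) v2
  | inl : CGPure e v → CGPure (.inl e) (.inl v)
  | inr : CGPure e v → CGPure (.inr e) (.inr v)
  | caseL : CGPure e (.inl v) → CGPure (e1.subst v 0) w → CGPure (.case e e1 e2) w
  | caseR : CGPure e (.inr v) → CGPure (e2.subst v 0) w → CGPure (.case e e1 e2) w
  | label : CGPure e v → CGPure (.label e) (.label v)
  | ret : CGPure (.ret e) (.ret e)
  | bind : CGPure (.bind e1 e2) (.bind e1 e2)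
  | unlabel : CGPure (.unlabel e) (.unlabel e)
  | toLabeled : CGPure (.toLabeled e) (.toLabeled e)
  | new : CGPure (.new e) (.new e)
  | deref : CGPure (.deref e) (.deref e)
  | assign : CGPure (.assign e1 e2) (.assign e1 e2)

/-- Forcing semantics for CG's monadic computations: actually performs heap
reads, writes and allocations. -/
inductive CGForce : Heap → Exp → Heap → Exp → Prop where
  | ret : CGPure e (.ret e0) → CGPure e0 v → CGForce h e h v
  | bind : CGPure e (.bind e1 e2) → CGForce h e1 h1 v1 →
      CGForce h1 (e2.subst v1 0) h2 v → CGForce h e h2 v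
  | unlabel : CGPure e (.unlabel e0) → CGPure e0 (.label v) → CGForce h e h v
  | toLabeled : CGPure e (.toLabeled e0) → CGForce h e0 h1 v →
      CGForce h e h1 (.label v)
  | new : CGPure e (.new e0) → CGPure e0 v → CGForce h e (h ++ [v]) (.loc h.length)
  | deref : CGPure e (.deref e0) → CGPure e0 (.loc n) → h[n]? = some v →
      CGForce h e h v
  | assign : CGPure e (.assign e1 e2) → CGPure e1 (.loc n) → CGPure e2 v →
      CGForce h e (h.set n v) .unit

/-! ## FG types (every type constructor carries its outer security label) -/

inductive FGTy (L : Type) : Type where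
  | bool (l : L)
  | unit (l : L)
  | fn (t1 : FGTy L) (le : L) (t2 : FGTy L) (l : L)
  | prod (t1 t2 : FGTy L) (l : L)
  | sum (t1 t2 : FGTy L) (l : L)
  | ref (t : FGTy L) (l : L)

/-- The outer label of an FG type (`(A^ℓ).lab = ℓ`).
`τ.lab ≥ ℓ` is the protection judgment `τ ↘ ℓ`. -/
def FGTy.lab {L : Type} : FGTy L → L
  | .bool l => l
  | .unit l => l
  | .fn _ _ _ l => l
  | .prod _ _ l => l
  | .sum _ _ l => l
  | .ref _ l => l

/-- FG subtyping: structural, covariant in security labels, contravariant in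
the pc-label of function types, invariant in the content type of references. -/
inductive FGSub {L : Type} [Lattice L] [BoundedOrder L] : FGTy L → FGTy L → Prop where
  | bool : l ≤ l' → FGSub (.bool l) (.bool l')
  | unit : l ≤ l' → FGSub (.unit l) (.unit l')
  | fn : FGSub τ1' τ1 → le' ≤ le → FGSub τ2 τ2' → l ≤ l' →
      FGSub (.fn τ1 le τ2 l) (.fn τ1' le' τ2' l')
  | prod : FGSub τ1 τ1' → FGSub τ2 τ2' → l ≤ l' →
      FGSub (.prod τ1 τ2 l) (.prod τ1' τ2' l')
  | sum : FGSub τ1 τ1' → FGSub τ2 τ2' → l ≤ l' →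
      FGSub (.sum τ1 τ2 l) (.sum τ1' τ2' l')
  | ref : l ≤ l' → FGSub (.ref τ l) (.ref τ l')

/-- The FG typing judgment `Γ ⊢_pc e : τ`. -/
inductive FGTyped {L : Type} [Lattice L] [BoundedOrder L] :
    List (FGTy L) → L → Exp → FGTy L → Prop where
  | var : Γ[n]? = some τ → FGTyped Γ pc (.var n) τ
  | tt : FGTyped Γ pc .tt (.bool ⊥)
  | ff : FGTyped Γ pc .ff (.bool ⊥)
  | unit : FGTyped Γ pc .unit (.unit ⊥)
  | lam : FGTyped (τ1 :: Γ) le e τ2 → FGTyped Γ pc (.lam e) (.fn τ1 le τ2 ⊥)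
  | app : FGTyped Γ pc e1 (.fn τ1 le τ2 l) → FGTyped Γ pc e2 τ1 →
      l ⊔ pc ≤ le → l ≤ τ2.lab → FGTyped Γ pc (.app e1 e2) τ2
  | pair : FGTyped Γ pc e1 τ1 → FGTyped Γ pc e2 τ2 →
      FGTyped Γ pc (.pair e1 e2) (.prod τ1 τ2 ⊥)
  | fst : FGTyped Γ pc e (.prod τ1 τ2 l) → l ≤ τ1.lab → FGTyped Γ pc (.fst e) τ1
  | snd : FGTyped Γ pc e (.prod τ1 τ2 l) → l ≤ τ2.lab → FGTyped Γ pc (.snd e) τ2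
  | inl : FGTyped Γ pc e τ1 → FGTyped Γ pc (.inl e) (.sum τ1 τ2 ⊥)
  | inr : FGTyped Γ pc e τ2 → FGTyped Γ pc (.inr e) (.sum τ1 τ2 ⊥)
  | case : FGTyped Γ pc e (.sum τ1 τ2 l) → FGTyped (τ1 :: Γ) (pc ⊔ l) e1 τ →
      FGTyped (τ2 :: Γ) (pc ⊔ l) e2 τ → l ≤ τ.lab →
      FGTyped Γ pc (.case e e1 e2) τ
  | new : FGTyped Γ pc e τ → pc ≤ τ.lab → FGTyped Γ pc (.new e) (.ref τ ⊥)
  | deref : FGTyped Γ pc e (.ref τ l) → FGSub τ τ' → l ≤ τ'.lab →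
      FGTyped Γ pc (.deref e) τ'
  | assign : FGTyped Γ pc e1 (.ref τ l) → FGTyped Γ pc e2 τ →
      pc ⊔ l ≤ τ.lab → FGTyped Γ pc (.assign e1 e2) (.unit ⊥)
  | sub : FGTyped Γ pc' e τ' → FGSub τ' τ → pc ≤ pc' → FGTyped Γ pc e τ

/-! ## CG types -/

inductive CGTy (L : Type) : Type where
  | bool
  | unit
  | fn (t1 t2 : CGTy L)
  | prod (t1 t2 : CGTy L)
  | sum (t1 t2 : CGTy L)
  | ref (l : L) (t : CGTy L)
  | labeled (l : L) (t : CGTy L)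
  | monad (l1 l2 : L) (t : CGTy L)   -- CG ℓ1 ℓ2 τ : pc-label ℓ1, taint label ℓ2

/-- CG subtyping: `Labeled ℓ τ` covariant in `ℓ` and `τ`; `CG ℓ1 ℓ2 τ`
contravariant in `ℓ1`, covariant in `ℓ2` and `τ`. -/
inductive CGSub {L : Type} [Lattice L] [BoundedOrder L] : CGTy L → CGTy L → Prop where
  | bool : CGSub .bool .bool
  | unit : CGSub .unit .unit
  | fn : CGSub τ1' τ1 → CGSub τ2 τ2' → CGSub (.fn τ1 τ2) (.fn τ1' τ2')
  | prod : CGSub τ1 τ1' → CGSub τ2 τ2' → CGSub (.prod τ1 τ2) (.prod τ1' τ2')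
  | sum : CGSub τ1 τ1' → CGSub τ2 τ2' → CGSub (.sum τ1 τ2) (.sum τ1' τ2')
  | ref : CGSub (.ref l τ) (.ref l τ)
  | labeled : CGSub τ τ' → l ≤ l' → CGSub (.labeled l τ) (.labeled l' τ')
  | monad : l1' ≤ l1 → l2 ≤ l2' → CGSub τ τ' →
      CGSub (.monad l1 l2 τ) (.monad l1' l2' τ')

/-- The CG typing judgment `Γ ⊢ e : τ`. -/
inductive CGTyped {L : Type} [Lattice L] [BoundedOrder L] :
    List (CGTy L) → Exp → CGTy L → Prop where
  | var : Γ[n]? = some τ → CGTyped Γ (.var n) τ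
  | tt : CGTyped Γ .tt .bool
  | ff : CGTyped Γ .ff .bool
  | unit : CGTyped Γ .unit .unit
  | lam : CGTyped (τ1 :: Γ) e τ2 → CGTyped Γ (.lam e) (.fn τ1 τ2)
  | app : CGTyped Γ e1 (.fn τ1 τ2) → CGTyped Γ e2 τ1 → CGTyped Γ (.app e1 e2) τ2
  | pair : CGTyped Γ e1 τ1 → CGTyped Γ e2 τ2 → CGTyped Γ (.pair e1 e2) (.prod τ1 τ2)
  | fst : CGTyped Γ e (.prod τ1 τ2) → CGTyped Γ (.fst e) τ1
  | snd : CGTyped Γ e (.prod τ1 τ2) → CGTyped Γ (.snd e) τ2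
  | inl : CGTyped Γ e τ1 → CGTyped Γ (.inl e) (.sum τ1 τ2)
  | inr : CGTyped Γ e τ2 → CGTyped Γ (.inr e) (.sum τ1 τ2)
  | case : CGTyped Γ e (.sum τ1 τ2) → CGTyped (τ1 :: Γ) e1 τ →
      CGTyped (τ2 :: Γ) e2 τ → CGTyped Γ (.case e e1 e2) τ
  | ret : CGTyped Γ e τ → CGTyped Γ (.ret e) (.monad ⊤ ⊥ τ)
  | bind : CGTyped Γ e1 (.monad l1 l2 τ) → CGTyped (τ :: Γ) e2 (.monad l3 l4 τ') →
      l ≤ l1 → l ≤ l3 → l2 ≤ l3 → l2 ≤ l4 →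
      CGTyped Γ (.bind e1 e2) (.monad l l4 τ')
  | label : CGTyped Γ e τ → CGTyped Γ (.label e) (.labeled l τ)
  | unlabel : CGTyped Γ e (.labeled l τ) → CGTyped Γ (.unlabel e) (.monad ⊤ l τ)
  | new : CGTyped Γ e (.labeled l τ) → CGTyped Γ (.new e) (.monad l ⊥ (.ref l τ))
  | deref : CGTyped Γ e (.ref l' τ) → CGTyped Γ (.deref e) (.monad ⊤ ⊥ (.labeled l' τ))
  | assign : CGTyped Γ e1 (.ref l τ) → CGTyped Γ e2 (.labeled l τ) →
      CGTyped Γ (.assign e1 e2) (.monad l ⊥ .unit)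
  | toLabeled : CGTyped Γ e (.monad l l' τ) →
      CGTyped Γ (.toLabeled e) (.monad l ⊥ (.labeled l' τ))
  | sub : CGTyped Γ e τ' → CGSub τ' τ → CGTyped Γ e τ

/-! ## The CG-to-FG type translation ⟦·⟧ -/

def toFG {L : Type} [Lattice L] [BoundedOrder L] : CGTy L → FGTy L
  | .bool => .bool ⊥
  | .unit => .unit ⊥
  | .fn τ1 τ2 => .fn (toFG τ1) ⊤ (toFG τ2) ⊥
  | .prod τ1 τ2 => .prod (toFG τ1) (toFG τ2) ⊥
  | .sum τ1 τ2 => .sum (toFG τ1) (toFG τ2) ⊥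
  | .ref l τ => .ref (.sum (toFG τ) (.unit ⊥) l) ⊥
  | .labeled l τ => .sum (toFG τ) (.unit ⊥) l
  | .monad l1 l2 τ => .fn (.unit ⊥) l1 (.sum (toFG τ) (.unit ⊥) l2) ⊥

/-! ## The FG-to-CG type translation: ⟦A^ℓ⟧ = Labeled ℓ ⟨A⟩ -/

/-- `⟨A⟩`: translation of the unlabeled part of an FG type. -/
def trA {L : Type} [Lattice L] [BoundedOrder L] : FGTy L → CGTy L
  | .bool _ => .bool
  | .unit _ => .unit
  | .fn τ1 le τ2 _ =>
      .fn (.labeled τ1.lab (trA τ1)) (.monad le ⊥ (.labeled τ2.lab (trA τ2)))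
  | .prod τ1 τ2 _ => .prod (.labeled τ1.lab (trA τ1)) (.labeled τ2.lab (trA τ2))
  | .sum τ1 τ2 _ => .sum (.labeled τ1.lab (trA τ1)) (.labeled τ2.lab (trA τ2))
  | .ref τ _ => .ref τ.lab (trA τ)

/-- `⟦A^ℓ⟧ = Labeled ℓ ⟨A⟩`. -/
def toCG {L : Type} [Lattice L] [BoundedOrder L] (τ : FGTy L) : CGTy L :=
  .labeled τ.lab (trA τ)

/-! ## CG-to-FG expression translation `Γ ⊢ e : τ ⇝ e_F` -/

inductive CG2FG {L : Type} [Lattice L] [BoundedOrder L] :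
    List (CGTy L) → Exp → CGTy L → Exp → Prop where
  | var : Γ[n]? = some τ → CG2FG Γ (.var n) τ (.var n)
  | tt : CG2FG Γ .tt .bool .tt
  | ff : CG2FG Γ .ff .bool .ff
  | unit : CG2FG Γ .unit .unit .unit
  | lam : CG2FG (τ1 :: Γ) e τ2 eF → CG2FG Γ (.lam e) (.fn τ1 τ2) (.lam eF)
  | app : CG2FG Γ e1 (.fn τ1 τ2) eF1 → CG2FG Γ e2 τ1 eF2 →
      CG2FG Γ (.app e1 e2) τ2 (.app eF1 eF2)
  | pair : CG2FG Γ e1 τ1 eF1 → CG2FG Γ e2 τ2 eF2 →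
      CG2FG Γ (.pair e1 e2) (.prod τ1 τ2) (.pair eF1 eF2)
  | fst : CG2FG Γ e (.prod τ1 τ2) eF → CG2FG Γ (.fst e) τ1 (.fst eF)
  | snd : CG2FG Γ e (.prod τ1 τ2) eF → CG2FG Γ (.snd e) τ2 (.snd eF)
  | inl : CG2FG Γ e τ1 eF → CG2FG Γ (.inl e) (.sum τ1 τ2) (.inl eF)
  | inr : CG2FG Γ e τ2 eF → CG2FG Γ (.inr e) (.sum τ1 τ2) (.inr eF)
  | case : CG2FG Γ e (.sum τ1 τ2) eF → CG2FG (τ1 :: Γ) e1 τ eF1 →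
      CG2FG (τ2 :: Γ) e2 τ eF2 → CG2FG Γ (.case e e1 e2) τ (.case eF eF1 eF2)
  | label : CG2FG Γ e τ eF → CG2FG Γ (.label e) (.labeled l τ) (.inl eF)
  | unlabel : CG2FG Γ e (.labeled l τ) eF →
      CG2FG Γ (.unlabel e) (.monad ⊤ l τ) (.lam (eF.shift 0))
  | toLabeled : CG2FG Γ e (.monad l1 l2 τ) eF →
      CG2FG Γ (.toLabeled e) (.monad l1 ⊥ (.labeled l2 τ))
        (.lam (.inl (.app (eF.shift 0) .unit)))
  | ret : CG2FG Γ e τ eF → CG2FG Γ (.ret e) (.monad ⊤ ⊥ τ) (.lam (.inl (eF.shift 0)))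
  | bind : CG2FG Γ e1 (.monad l1 l2 τ) eF1 →
      CG2FG (τ :: Γ) e2 (.monad l3 l4 τ') eF2 →
      l ≤ l1 → l ≤ l3 → l2 ≤ l3 → l2 ≤ l4 →
      CG2FG Γ (.bind e1 e2) (.monad l l4 τ')
        (.lam (.case (.app (eF1.shift 0) .unit) (.app (eF2.shift 1) .unit)
          (.inr .unit)))
  | new : CG2FG Γ e (.labeled l τ) eF →
      CG2FG Γ (.new e) (.monad l ⊥ (.ref l τ)) (.lam (.inl (.new (eF.shift 0))))
  | deref : CG2FG Γ e (.ref l' τ) eF →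
      CG2FG Γ (.deref e) (.monad ⊤ ⊥ (.labeled l' τ))
        (.lam (.inl (.deref (eF.shift 0))))
  | assign : CG2FG Γ e1 (.ref l τ) eF1 → CG2FG Γ e2 (.labeled l τ) eF2 →
      CG2FG Γ (.assign e1 e2) (.monad l ⊥ .unit)
        (.lam (.inl (.assign (eF1.shift 0) (eF2.shift 0))))
  | sub : CG2FG Γ e τ' eF → CGSub τ' τ → CG2FG Γ e τ eF

/-! ## FG-to-CG expression translation `Γ ⊢_pc e : τ ⇝ e_c` -/

/-- `coerce_taint ≜ λx. toLabeled(bind(x, y. unlabel y))`. -/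
def coerceTaint : Exp := .lam (.toLabeled (.bind (.var 0) (.unlabel (.var 0))))

inductive FG2CG {L : Type} [Lattice L] [BoundedOrder L] :
    List (FGTy L) → L → Exp → FGTy L → Exp → Prop where
  | var : Γ[n]? = some τ → FG2CG Γ pc (.var n) τ (.ret (.var n))
  | tt : FG2CG Γ pc .tt (.bool ⊥) (.ret (.label .tt))
  | ff : FG2CG Γ pc .ff (.bool ⊥) (.ret (.label .ff))
  | unit : FG2CG Γ pc .unit (.unit ⊥) (.ret (.label .unit))
  | lam : FG2CG (τ1 :: Γ) le e τ2 ec →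
      FG2CG Γ pc (.lam e) (.fn τ1 le τ2 ⊥) (.ret (.label (.lam ec)))
  | app : FG2CG Γ pc e1 (.fn τ1 le τ2 l) ec1 → FG2CG Γ pc e2 τ1 ec2 →
      l ⊔ pc ≤ le → l ≤ τ2.lab →
      FG2CG Γ pc (.app e1 e2) τ2
        (.app coerceTaint
          (.bind ec1 (.bind (ec2.shift 0)
            (.bind (.unlabel (.var 1)) (.app (.var 0) (.var 1))))))
  | pair : FG2CG Γ pc e1 τ1 ec1 → FG2CG Γ pc e2 τ2 ec2 →
      FG2CG Γ pc (.pair e1 e2) (.prod τ1 τ2 ⊥)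
        (.bind ec1 (.bind (ec2.shift 0) (.ret (.label (.pair (.var 1) (.var 0))))))
  | fst : FG2CG Γ pc e (.prod τ1 τ2 l) ec → l ≤ τ1.lab →
      FG2CG Γ pc (.fst e) τ1
        (.app coerceTaint
          (.bind ec (.bind (.unlabel (.var 0)) (.ret (.fst (.var 0))))))
  | snd : FG2CG Γ pc e (.prod τ1 τ2 l) ec → l ≤ τ2.lab →
      FG2CG Γ pc (.snd e) τ2
        (.app coerceTaint
          (.bind ec (.bind (.unlabel (.var 0)) (.ret (.snd (.var 0))))))
  | inl : FG2CG Γ pc e τ1 ec →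
      FG2CG Γ pc (.inl e) (.sum τ1 τ2 ⊥) (.bind ec (.ret (.label (.inl (.var 0)))))
  | inr : FG2CG Γ pc e τ2 ec →
      FG2CG Γ pc (.inr e) (.sum τ1 τ2 ⊥) (.bind ec (.ret (.label (.inr (.var 0)))))
  | case : FG2CG Γ pc e (.sum τ1 τ2 l) ec →
      FG2CG (τ1 :: Γ) (pc ⊔ l) e1 τ ec1 → FG2CG (τ2 :: Γ) (pc ⊔ l) e2 τ ec2 →
      l ≤ τ.lab →
      FG2CG Γ pc (.case e e1 e2) τ
        (.app coerceTaint
          (.bind ec (.bind (.unlabel (.var 0))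
            (.case (.var 0) ((ec1.shift 1).shift 1) ((ec2.shift 1).shift 1)))))
  | new : FG2CG Γ pc e τ ec → pc ≤ τ.lab →
      FG2CG Γ pc (.new e) (.ref τ ⊥)
        (.bind ec (.bind (.new (.var 0)) (.ret (.label (.var 0)))))
  | deref : FG2CG Γ pc e (.ref τ l) ec → FGSub τ τ' → l ≤ τ'.lab →
      FG2CG Γ pc (.deref e) τ'
        (.app coerceTaint
          (.bind ec (.bind (.unlabel (.var 0)) (.deref (.var 0)))))
  | assign : FG2CG Γ pc e1 (.ref τ l) ec1 → FG2CG Γ pc e2 τ ec2 →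
      pc ⊔ l ≤ τ.lab →
      FG2CG Γ pc (.assign e1 e2) (.unit ⊥)
        (.bind (.toLabeled (.bind ec1 (.bind (ec2.shift 0)
          (.bind (.unlabel (.var 1)) (.assign (.var 0) (.var 1))))))
          (.ret (.label .unit)))
  | sub : FG2CG Γ pc' e τ' ec → FGSub τ' τ → pc ≤ pc' → FG2CG Γ pc e τ ec

namespace CGNI

/-! ### Subtyping -/

theorem sub_refl {L : Type} [Lattice L] [BoundedOrder L] (τ : CGTy L) : CGSub τ τ := by
  induction τ with
  | bool => exact .bool
  | unit => exact .unit
  | fn _ _ h1 h2 => exact .fn h1 h2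
  | prod _ _ h1 h2 => exact .prod h1 h2
  | sum _ _ h1 h2 => exact .sum h1 h2
  | ref => exact .ref
  | labeled _ _ h => exact .labeled h le_rfl
  | monad _ _ _ h => exact .monad le_rfl le_rfl h

theorem sub_trans {L : Type} [Lattice L] [BoundedOrder L] {τ2 : CGTy L} :
    ∀ {τ1 τ3 : CGTy L}, CGSub τ1 τ2 → CGSub τ2 τ3 → CGSub τ1 τ3 := by
  induction τ2 with
  | bool | unit | ref => intro _ _ h1 h2; cases h1; exact h2
  | fn _ _ ih1 ih2 =>
    intro _ _ h1 h2
    cases h1 with | fn a b => cases h2 with | fn c d => exact .fn (ih1 c a) (ih2 b d)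
  | prod _ _ ih1 ih2 =>
    intro _ _ h1 h2
    cases h1 with | prod a b => cases h2 with | prod c d => exact .prod (ih1 a c) (ih2 b d)
  | sum _ _ ih1 ih2 =>
    intro _ _ h1 h2
    cases h1 with | sum a b => cases h2 with | sum c d => exact .sum (ih1 a c) (ih2 b d)
  | labeled _ _ ih =>
    intro _ _ h1 h2
    cases h1 with
    | labeled a b => cases h2 with | labeled c d => exact .labeled (ih a c) (b.trans d)
  | monad _ _ _ ih =>
    intro _ _ h1 h2
    cases h1 with
    | monad a b c =>
      cases h2 with | monad d e f => exact .monad (d.trans a) (b.trans e) (ih c f)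

/-! ### Pure evaluation and values -/

theorem pure_val {e v : Exp} (h : CGPure e v) : CGVal v := by
  induction h with
  | app _ _ _ _ _ ih => exact ih
  | caseL _ _ _ ih => exact ih
  | caseR _ _ _ ih => exact ih
  | pair _ _ h1 h2 => exact .pair h1 h2
  | fst _ ih => cases ih; assumption
  | snd _ ih => cases ih; assumption
  | inl _ ih => exact .inl ih
  | inr _ ih => exact .inr ih
  | label _ ih => exact .label ih
  | _ => constructor

theorem val_pure {v w : Exp} (hv : CGVal v) (h : CGPure v w) : w = v := by
  induction h with
  | pair _ _ h1 h2 => cases hv with | pair a b => rw [h1 a, h2 b]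
  | inl _ ih => cases hv with | inl a => rw [ih a]
  | inr _ ih => cases hv with | inr a => rw [ih a]
  | label _ ih => cases hv with | label a => rw [ih a]
  | app | fst | snd | caseL | caseR => cases hv
  | _ => rfl

theorem force_val {h h' : Heap} {e v : Exp} (hf : CGForce h e h' v) :
    (∀ x ∈ h, CGVal x) → (∀ x ∈ h', CGVal x) ∧ CGVal v := by
  induction hf with
  | ret _ h2 => exact fun hh => ⟨hh, pure_val h2⟩
  | bind _ _ _ ih1 ih2 => exact fun hh => ih2 (ih1 hh).1
  | unlabel _ h2 => exact fun hh => ⟨hh, by cases pure_val h2; assumption⟩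
  | toLabeled _ _ ih => exact fun hh => ⟨(ih hh).1, .label (ih hh).2⟩
  | new _ h2 =>
    refine fun hh => ⟨fun x hx => ?_, .loc⟩
    rcases List.mem_append.1 hx with hx | hx
    · exact hh x hx
    · rw [List.mem_singleton.1 hx]; exact pure_val h2
  | deref _ _ h3 => exact fun hh => ⟨hh, hh _ (List.mem_of_getElem? h3)⟩
  | assign _ _ h3 =>
    refine fun hh => ⟨fun x hx => ?_, .unit⟩
    rcases List.mem_or_eq_of_mem_set hx with hx | rfl
    · exact hh x hx
    · exact pure_val h3

/-- Expressions without free de Bruijn indices, expressed by invariance under shifting and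
substitution at every index. -/
def Closed (e : Exp) : Prop := (∀ k, e.shift k = e) ∧ ∀ u k, e.subst u k = e

/-! ### A two-run typing judgment -/

/-- Typing of a pair of expressions of the same shape. `S n₁ n₂ l τ` says that the locations
`n₁`, `n₂` are related references of type `ref l τ`; `Q w₁ w₂ l τ` says that `label w₁` and
`label w₂` may be related at type `Labeled l τ` although `w₁`, `w₂` need not resemble each other.
Subsumption is built into each rule, so the judgment is syntax directed. -/
inductive Rel {L : Type} [Lattice L] [BoundedOrder L]
    (S : ℕ → ℕ → L → CGTy L → Prop) (Q : Exp → Exp → L → CGTy L → Prop) :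
    List (CGTy L) → Exp → Exp → CGTy L → Prop where
  | var {Γ n τ σ} : Γ[n]? = some τ → CGSub τ σ → Rel S Q Γ (.var n) (.var n) σ
  | tt {Γ σ} : CGSub .bool σ → Rel S Q Γ .tt .tt σ
  | ff {Γ σ} : CGSub .bool σ → Rel S Q Γ .ff .ff σ
  | unit {Γ σ} : CGSub .unit σ → Rel S Q Γ .unit .unit σ
  | lam {Γ e e' τ1 τ2 σ} : Rel S Q (τ1 :: Γ) e e' τ2 → CGSub (.fn τ1 τ2) σ →
      Rel S Q Γ (.lam e) (.lam e') σ
  | app {Γ e1 e1' e2 e2' τ1 τ2 σ} : Rel S Q Γ e1 e1' (.fn τ1 τ2) → Rel S Q Γ e2 e2' τ1 →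
      CGSub τ2 σ → Rel S Q Γ (.app e1 e2) (.app e1' e2') σ
  | pair {Γ e1 e1' e2 e2' τ1 τ2 σ} : Rel S Q Γ e1 e1' τ1 → Rel S Q Γ e2 e2' τ2 →
      CGSub (.prod τ1 τ2) σ → Rel S Q Γ (.pair e1 e2) (.pair e1' e2') σ
  | fst {Γ e e' τ1 τ2 σ} : Rel S Q Γ e e' (.prod τ1 τ2) → CGSub τ1 σ →
      Rel S Q Γ (.fst e) (.fst e') σ
  | snd {Γ e e' τ1 τ2 σ} : Rel S Q Γ e e' (.prod τ1 τ2) → CGSub τ2 σ →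
      Rel S Q Γ (.snd e) (.snd e') σ
  | inl {Γ e e' τ1 τ2 σ} : Rel S Q Γ e e' τ1 → CGSub (.sum τ1 τ2) σ →
      Rel S Q Γ (.inl e) (.inl e') σ
  | inr {Γ e e' τ1 τ2 σ} : Rel S Q Γ e e' τ2 → CGSub (.sum τ1 τ2) σ →
      Rel S Q Γ (.inr e) (.inr e') σ
  | case {Γ e e' e1 e1' e2 e2' τ1 τ2 τ σ} : Rel S Q Γ e e' (.sum τ1 τ2) →
      Rel S Q (τ1 :: Γ) e1 e1' τ → Rel S Q (τ2 :: Γ) e2 e2' τ → CGSub τ σ →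
      Rel S Q Γ (.case e e1 e2) (.case e' e1' e2') σ
  | loc {Γ n n' l τ σ} : S n n' l τ → CGSub (.ref l τ) σ → Rel S Q Γ (.loc n) (.loc n') σ
  | ret {Γ e e' τ σ} : Rel S Q Γ e e' τ → CGSub (.monad ⊤ ⊥ τ) σ →
      Rel S Q Γ (.ret e) (.ret e') σ
  | bind {Γ e1 e1' e2 e2' l l1 l2 l3 l4 τ τ' σ} : Rel S Q Γ e1 e1' (.monad l1 l2 τ) →
      Rel S Q (τ :: Γ) e2 e2' (.monad l3 l4 τ') → l ≤ l1 → l ≤ l3 → l2 ≤ l3 → l2 ≤ l4 →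
      CGSub (.monad l l4 τ') σ → Rel S Q Γ (.bind e1 e2) (.bind e1' e2') σ
  | label {Γ e e' l τ σ} : Rel S Q Γ e e' τ → CGSub (.labeled l τ) σ →
      Rel S Q Γ (.label e) (.label e') σ
  | high {Γ e e' l τ σ} : Q e e' l τ → CGVal e → CGVal e' → Closed e → Closed e' →
      CGSub (.labeled l τ) σ → Rel S Q Γ (.label e) (.label e') σ
  | unlabel {Γ e e' l τ σ} : Rel S Q Γ e e' (.labeled l τ) → CGSub (.monad ⊤ l τ) σ →
      Rel S Q Γ (.unlabel e) (.unlabel e') σ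
  | new {Γ e e' l τ σ} : Rel S Q Γ e e' (.labeled l τ) → CGSub (.monad l ⊥ (.ref l τ)) σ →
      Rel S Q Γ (.new e) (.new e') σ
  | deref {Γ e e' l τ σ} : Rel S Q Γ e e' (.ref l τ) → CGSub (.monad ⊤ ⊥ (.labeled l τ)) σ →
      Rel S Q Γ (.deref e) (.deref e') σ
  | assign {Γ e1 e1' e2 e2' l τ σ} : Rel S Q Γ e1 e1' (.ref l τ) →
      Rel S Q Γ e2 e2' (.labeled l τ) → CGSub (.monad l ⊥ .unit) σ →
      Rel S Q Γ (.assign e1 e2) (.assign e1' e2') σ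
  | toLabeled {Γ e e' l l' τ σ} : Rel S Q Γ e e' (.monad l l' τ) →
      CGSub (.monad l ⊥ (.labeled l' τ)) σ → Rel S Q Γ (.toLabeled e) (.toLabeled e') σ

section RelLemmas

variable {L : Type} [Lattice L] [BoundedOrder L]
  {S S' : ℕ → ℕ → L → CGTy L → Prop} {Q Q' : Exp → Exp → L → CGTy L → Prop}

theorem Rel.sub {Γ : List (CGTy L)} {e e' : Exp} {σ ρ : CGTy L} (h : Rel S Q Γ e e' σ)
    (hs : CGSub σ ρ) : Rel S Q Γ e e' ρ := by
  cases h with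
  | var a s => exact .var a (sub_trans s hs)
  | tt s => exact .tt (sub_trans s hs)
  | ff s => exact .ff (sub_trans s hs)
  | unit s => exact .unit (sub_trans s hs)
  | lam a s => exact .lam a (sub_trans s hs)
  | app a b s => exact .app a b (sub_trans s hs)
  | pair a b s => exact .pair a b (sub_trans s hs)
  | fst a s => exact .fst a (sub_trans s hs)
  | snd a s => exact .snd a (sub_trans s hs)
  | inl a s => exact .inl a (sub_trans s hs)
  | inr a s => exact .inr a (sub_trans s hs)
  | case a b c s => exact .case a b c (sub_trans s hs)
  | loc a s => exact .loc a (sub_trans s hs)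
  | ret a s => exact .ret a (sub_trans s hs)
  | bind a b c d e f s => exact .bind a b c d e f (sub_trans s hs)
  | label a s => exact .label a (sub_trans s hs)
  | high a b c d e s => exact .high a b c d e (sub_trans s hs)
  | unlabel a s => exact .unlabel a (sub_trans s hs)
  | new a s => exact .new a (sub_trans s hs)
  | deref a s => exact .deref a (sub_trans s hs)
  | assign a b s => exact .assign a b (sub_trans s hs)
  | toLabeled a s => exact .toLabeled a (sub_trans s hs)

/-- Source programs contain no locations, so they are related to themselves over any world. -/
theorem rel_of_typed {Γ : List (CGTy L)} {e : Exp} {τ : CGTy L} (h : CGTyped Γ e τ) :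
    Rel S Q Γ e e τ := by
  induction h with
  | var a => exact .var a (sub_refl _)
  | tt => exact .tt (sub_refl _)
  | ff => exact .ff (sub_refl _)
  | unit => exact .unit (sub_refl _)
  | lam _ a => exact .lam a (sub_refl _)
  | app _ _ a b => exact .app a b (sub_refl _)
  | pair _ _ a b => exact .pair a b (sub_refl _)
  | fst _ a => exact .fst a (sub_refl _)
  | snd _ a => exact .snd a (sub_refl _)
  | inl _ a => exact .inl a (sub_refl _)
  | inr _ a => exact .inr a (sub_refl _)
  | case _ _ _ a b c => exact .case a b c (sub_refl _)
  | ret _ a => exact .ret a (sub_refl _)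
  | bind _ _ c d e f a b => exact .bind a b c d e f (sub_refl _)
  | label _ a => exact .label a (sub_refl _)
  | unlabel _ a => exact .unlabel a (sub_refl _)
  | new _ a => exact .new a (sub_refl _)
  | deref _ a => exact .deref a (sub_refl _)
  | assign _ _ a b => exact .assign a b (sub_refl _)
  | toLabeled _ a => exact .toLabeled a (sub_refl _)
  | sub _ s a => exact a.sub s

/-- Monotonicity in the world and in the context (extended at its far end, so that no
index changes). -/
theorem Rel.mono {Γ : List (CGTy L)} {e e' : Exp} {τ : CGTy L} (h : Rel S Q Γ e e' τ)
    (hS : ∀ n n' l t, S n n' l t → S' n n' l t) (hQ : ∀ w w' l t, Q w w' l t → Q' w w' l t)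
    (Δ : List (CGTy L)) : Rel S' Q' (Γ ++ Δ) e e' τ := by
  induction h with
  | var a s =>
    refine .var ?_ s
    rw [List.getElem?_append_left (List.getElem?_eq_some_iff.1 a).1]; exact a
  | tt s => exact .tt s
  | ff s => exact .ff s
  | unit s => exact .unit s
  | lam _ s a => exact .lam a s
  | app _ _ s a b => exact .app a b s
  | pair _ _ s a b => exact .pair a b s
  | fst _ s a => exact .fst a s
  | snd _ s a => exact .snd a s
  | inl _ s a => exact .inl a s
  | inr _ s a => exact .inr a s
  | case _ _ _ s a b c => exact .case a b c s
  | loc a s => exact .loc (hS _ _ _ _ a) s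
  | ret _ s a => exact .ret a s
  | bind _ _ c d e f s a b => exact .bind a b c d e f s
  | label _ s a => exact .label a s
  | high a b c d e s => exact .high (hQ _ _ _ _ a) b c d e s
  | unlabel _ s a => exact .unlabel a s
  | new _ s a => exact .new a s
  | deref _ s a => exact .deref a s
  | assign _ _ s a b => exact .assign a b s
  | toLabeled _ s a => exact .toLabeled a s

theorem Rel.symm {Γ : List (CGTy L)} {e e' : Exp} {τ : CGTy L} (h : Rel S Q Γ e e' τ) :
    Rel (fun n n' => S n' n) (fun w w' => Q w' w) Γ e' e τ := by
  induction h with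
  | var a s => exact .var a s
  | tt s => exact .tt s
  | ff s => exact .ff s
  | unit s => exact .unit s
  | lam _ s a => exact .lam a s
  | app _ _ s a b => exact .app a b s
  | pair _ _ s a b => exact .pair a b s
  | fst _ s a => exact .fst a s
  | snd _ s a => exact .snd a s
  | inl _ s a => exact .inl a s
  | inr _ s a => exact .inr a s
  | case _ _ _ s a b c => exact .case a b c s
  | loc a s => exact .loc a s
  | ret _ s a => exact .ret a s
  | bind _ _ c d e f s a b => exact .bind a b c d e f s
  | label _ s a => exact .label a s
  | high a b c d e s => exact .high a c b e d s
  | unlabel _ s a => exact .unlabel a s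
  | new _ s a => exact .new a s
  | deref _ s a => exact .deref a s
  | assign _ _ s a b => exact .assign a b s
  | toLabeled _ s a => exact .toLabeled a s

/-- Projection of a related pair to its first component. -/
theorem Rel.left {Γ : List (CGTy L)} {e e' : Exp} {τ : CGTy L} (h : Rel S Q Γ e e' τ)
    (hS : ∀ n n' l t, S n n' l t → S' n n l t)
    (hQ : ∀ w w' l t, Q w w' l t → Rel S' Q' [] w w t) : Rel S' Q' Γ e e τ := by
  induction h with
  | var a s => exact .var a s
  | tt s => exact .tt s
  | ff s => exact .ff s
  | unit s => exact .unit s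
  | lam _ s a => exact .lam a s
  | app _ _ s a b => exact .app a b s
  | pair _ _ s a b => exact .pair a b s
  | fst _ s a => exact .fst a s
  | snd _ s a => exact .snd a s
  | inl _ s a => exact .inl a s
  | inr _ s a => exact .inr a s
  | case _ _ _ s a b c => exact .case a b c s
  | loc a s => exact .loc (hS _ _ _ _ a) s
  | ret _ s a => exact .ret a s
  | bind _ _ c d e f s a b => exact .bind a b c d e f s
  | label _ s a => exact .label a s
  | @high Γ _ _ _ _ _ a _ _ _ _ s =>
    exact .label ((hQ _ _ _ _ a).mono (fun _ _ _ _ h => h) (fun _ _ _ _ h => h) Γ) s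
  | unlabel _ s a => exact .unlabel a s
  | new _ s a => exact .new a s
  | deref _ s a => exact .deref a s
  | assign _ _ s a b => exact .assign a b s
  | toLabeled _ s a => exact .toLabeled a s

theorem Rel.closed_aux {Γ : List (CGTy L)} {e e' : Exp} {τ : CGTy L} (h : Rel S Q Γ e e' τ) :
    ∀ k, Γ.length ≤ k → e.shift k = e ∧ ∀ u, e.subst u k = e := by
  induction h with
  | var a s =>
    intro k hk
    have := (List.getElem?_eq_some_iff.1 a).1
    refine ⟨by simp only [Exp.shift]; rw [if_pos (by omega)], fun u => ?_⟩
    simp only [Exp.subst]; rw [if_neg (by omega), if_neg (by omega)]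
  | tt | ff | unit | loc => exact fun k _ => ⟨rfl, fun _ => rfl⟩
  | high _ _ _ d _ _ =>
    intro k _
    simp only [Exp.shift, Exp.subst]
    exact ⟨by rw [d.1], fun u => by rw [d.2]⟩
  | app _ _ _ a b | pair _ _ _ a b | assign _ _ _ a b =>
    intro k hk
    simp only [Exp.shift, Exp.subst]
    exact ⟨by rw [(a k hk).1, (b k hk).1], fun u => by rw [(a k hk).2, (b k hk).2]⟩
  | lam _ _ a =>
    intro k hk
    have hk' := Nat.succ_le_succ hk
    simp only [Exp.shift, Exp.subst]
    exact ⟨by rw [(a _ hk').1], fun u => by rw [(a _ hk').2]⟩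
  | bind _ _ _ _ _ _ _ a b =>
    intro k hk
    have hk' := Nat.succ_le_succ hk
    simp only [Exp.shift, Exp.subst]
    exact ⟨by rw [(a k hk).1, (b _ hk').1], fun u => by rw [(a k hk).2, (b _ hk').2]⟩
  | case _ _ _ _ a b c =>
    intro k hk
    have hk' := Nat.succ_le_succ hk
    simp only [Exp.shift, Exp.subst]
    exact ⟨by rw [(a k hk).1, (b _ hk').1, (c _ hk').1],
      fun u => by rw [(a k hk).2, (b _ hk').2, (c _ hk').2]⟩
  | fst _ _ a | snd _ _ a | inl _ _ a | inr _ _ a | ret _ _ a | label _ _ a | unlabel _ _ a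
  | new _ _ a | deref _ _ a | toLabeled _ _ a =>
    intro k hk
    simp only [Exp.shift, Exp.subst]
    exact ⟨by rw [(a k hk).1], fun u => by rw [(a k hk).2]⟩

theorem Rel.closed_left {e e' : Exp} {τ : CGTy L} (h : Rel S Q [] e e' τ) : Closed e :=
  ⟨fun k => (h.closed_aux k (Nat.zero_le _)).1,
   fun u k => (h.closed_aux k (Nat.zero_le _)).2 u⟩

theorem Rel.closed_right {e e' : Exp} {τ : CGTy L} (h : Rel S Q [] e e' τ) : Closed e' :=
  h.symm.closed_left

theorem Rel.subst_aux {a a' : Exp} {τ : CGTy L} (ha : Rel S Q [] a a' τ)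
    {Γ₀ : List (CGTy L)} {e e' : Exp} {σ : CGTy L} (h : Rel S Q Γ₀ e e' σ) :
    ∀ Γ, Γ₀ = Γ ++ [τ] →
      Rel S Q Γ (e.subst a Γ.length) (e'.subst a' Γ.length) σ := by
  have hc : a.shift 0 = a := ha.closed_left.1 0
  have hc' : a'.shift 0 = a' := ha.closed_right.1 0
  induction h with
  | @var Γ₀ n ρ σ x s =>
    rintro Γ rfl
    simp only [Exp.subst]
    rcases lt_trichotomy n Γ.length with hn | hn | hn
    · simp only [if_neg hn.ne, if_neg hn.le.not_gt]
      rw [List.getElem?_append_left hn] at x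
      exact .var x s
    · rw [if_pos hn, if_pos hn]
      subst hn
      simp only [List.getElem?_concat_length, Option.some.injEq] at x
      subst x
      exact (ha.mono (fun _ _ _ _ h => h) (fun _ _ _ _ h => h) Γ).sub s
    · have := (List.getElem?_eq_some_iff.1 x).1
      simp at this
      omega
  | tt s => exact fun _ _ => .tt s
  | ff s => exact fun _ _ => .ff s
  | unit s => exact fun _ _ => .unit s
  | loc x s => exact fun _ _ => .loc x s
  | high x b c d e s =>
    intro Γ _
    simp only [Exp.subst]
    rw [d.2, e.2]
    exact .high x b c d e s
  | @lam _ _ _ t1 _ _ _ s x =>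
    rintro Γ rfl
    simp only [Exp.subst]; rw [hc, hc']
    exact .lam (x (t1 :: Γ) rfl) s
  | @bind _ _ _ _ _ _ _ _ _ _ t _ _ _ _ c d e f s x y =>
    rintro Γ rfl
    simp only [Exp.subst]; rw [hc, hc']
    exact .bind (x Γ rfl) (y (t :: Γ) rfl) c d e f s
  | @case _ _ _ _ _ _ _ t1 t2 _ _ _ _ _ s x y z =>
    rintro Γ rfl
    simp only [Exp.subst]; rw [hc, hc']
    exact .case (x Γ rfl) (y (t1 :: Γ) rfl) (z (t2 :: Γ) rfl) s
  | app _ _ s x y => exact fun Γ h => .app (x Γ h) (y Γ h) s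
  | pair _ _ s x y => exact fun Γ h => .pair (x Γ h) (y Γ h) s
  | assign _ _ s x y => exact fun Γ h => .assign (x Γ h) (y Γ h) s
  | fst _ s x => exact fun Γ h => .fst (x Γ h) s
  | snd _ s x => exact fun Γ h => .snd (x Γ h) s
  | inl _ s x => exact fun Γ h => .inl (x Γ h) s
  | inr _ s x => exact fun Γ h => .inr (x Γ h) s
  | ret _ s x => exact fun Γ h => .ret (x Γ h) s
  | label _ s x => exact fun Γ h => .label (x Γ h) s
  | unlabel _ s x => exact fun Γ h => .unlabel (x Γ h) s
  | new _ s x => exact fun Γ h => .new (x Γ h) s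
  | deref _ s x => exact fun Γ h => .deref (x Γ h) s
  | toLabeled _ s x => exact fun Γ h => .toLabeled (x Γ h) s

theorem Rel.subst {a a' e e' : Exp} {τ σ : CGTy L} (h : Rel S Q [τ] e e' σ)
    (ha : Rel S Q [] a a' τ) : Rel S Q [] (e.subst a 0) (e'.subst a' 0) σ :=
  ha.subst_aux h [] rfl

/-- Pure evaluation preserves the two-run judgment. In particular both runs take the same
branches: opaque labeled values are never inspected by pure code. -/
theorem Rel.pure {e v : Exp} (hp : CGPure e v) :
    ∀ {e' v' : Exp} {τ : CGTy L}, Rel S Q [] e e' τ → CGPure e' v' → Rel S Q [] v v' τ := by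
  induction hp with
  | app _ _ _ ih1 ih2 ih3 =>
    intro e' v' τ hr hp'
    cases hr with
    | app a b s =>
      cases hp' with
      | app p1 p2 p3 =>
        cases ih1 a p1 with
        | lam c t =>
          cases t with
          | fn t1 t2 => exact (ih3 (c.subst ((ih2 b p2).sub t1)) p3).sub (sub_trans t2 s)
  | pair _ _ ih1 ih2 =>
    intro e' v' τ hr hp'
    cases hr with
    | pair a b s => cases hp' with | pair p1 p2 => exact .pair (ih1 a p1) (ih2 b p2) s
  | fst _ ih =>
    intro e' v' τ hr hp'
    cases hr with
    | fst a s =>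
      cases hp' with
      | fst p =>
        cases ih a p with
        | pair c d t => cases t with | prod t1 t2 => exact c.sub (sub_trans t1 s)
  | snd _ ih =>
    intro e' v' τ hr hp'
    cases hr with
    | snd a s =>
      cases hp' with
      | snd p =>
        cases ih a p with
        | pair c d t => cases t with | prod t1 t2 => exact d.sub (sub_trans t2 s)
  | inl _ ih =>
    intro e' v' τ hr hp'
    cases hr with | inl a s => cases hp' with | inl p => exact .inl (ih a p) s
  | inr _ ih =>
    intro e' v' τ hr hp'
    cases hr with | inr a s => cases hp' with | inr p => exact .inr (ih a p) s
  | caseL _ _ ih1 ih2 =>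
    intro e' v' τ hr hp'
    cases hr with
    | case a b c s =>
      cases hp' with
      | caseL p1 p2 =>
        cases ih1 a p1 with
        | inl d t => cases t with | sum t1 t2 => exact (ih2 (b.subst (d.sub t1)) p2).sub s
      | caseR p1 p2 => cases ih1 a p1
  | caseR _ _ ih1 ih2 =>
    intro e' v' τ hr hp'
    cases hr with
    | case a b c s =>
      cases hp' with
      | caseL p1 p2 => cases ih1 a p1
      | caseR p1 p2 =>
        cases ih1 a p1 with
        | inr d t => cases t with | sum t1 t2 => exact (ih2 (c.subst (d.sub t2)) p2).sub s
  | label h ih =>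
    intro e' v' τ hr hp'
    cases hr with
    | label a s => cases hp' with | label p => exact .label (ih a p) s
    | high a b c d e s =>
      cases hp' with
      | label p => rw [val_pure b h, val_pure c p]; exact .high a b c d e s
  | _ =>
    intro e' v' τ hr hp'
    have hr' := hr
    cases hr'
    all_goals (cases hp'; exact hr)

end RelLemmas

/-! ### Single-run typing with a store -/

section Worlds

variable {L : Type} [Lattice L] [BoundedOrder L]

/-- Typing of a single closed runtime expression over the store typing `T`: the diagonal of the
two-run judgment, with the rule for opaque labeled values disabled. -/
def UTy (T : List (L × CGTy L)) (e : Exp) (τ : CGTy L) : Prop :=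
  Rel (fun n n' l t => n = n' ∧ T[n]? = some (l, t)) (fun _ _ _ _ => False) [] e e τ

theorem prefix_get {α : Type} {T T' : List α} (h : T <+: T') {n : ℕ} {x : α}
    (hn : T[n]? = some x) : T'[n]? = some x := by
  obtain ⟨r, rfl⟩ := h
  rw [List.getElem?_append_left (List.getElem?_eq_some_iff.1 hn).1]; exact hn

theorem UTy.mono {T T' : List (L × CGTy L)} {e : Exp} {τ : CGTy L} (h : UTy T e τ)
    (hT : T <+: T') : UTy T' e τ := by
  have := Rel.mono (S' := fun n n' l t => n = n' ∧ T'[n]? = some (l, t))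
    (Q' := fun _ _ _ _ => False) h (fun _ _ _ _ h => ⟨h.1, prefix_get hT h.2⟩)
    (fun _ _ _ _ h => h) []
  rw [List.append_nil] at this
  exact this

/-- A closed labeled value is syntactically `label w`. -/
theorem UTy.labeled_inv {T : List (L × CGTy L)} {v : Exp} {l : L} {τ : CGTy L}
    (h : UTy T v (.labeled l τ)) (hv : CGVal v) :
    ∃ w, v = .label w ∧ CGVal w ∧ UTy T w τ := by
  unfold UTy at h
  cases hv with
  | label hw =>
    cases h with
    | label a s => cases s with | labeled s1 s2 => exact ⟨_, rfl, hw, a.sub s1⟩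
    | high a => exact a.elim
  | _ => cases h; rename_i s; cases s

/-- The heap `h` consists of values and is well typed by the store typing `T`. -/
structure HeapTy (T : List (L × CGTy L)) (h : Heap) : Prop where
  len : h.length = T.length
  val : ∀ x ∈ h, CGVal x
  typ : ∀ (n : ℕ) w l t, h[n]? = some w → T[n]? = some (l, t) → UTy T w (.labeled l t)

theorem HeapTy.get {T : List (L × CGTy L)} {h : Heap} (ht : HeapTy T h) {n : ℕ} {x : L × CGTy L}
    (hn : T[n]? = some x) : ∃ w, h[n]? = some w := by
  have := (List.getElem?_eq_some_iff.1 hn).1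
  exact ⟨_, List.getElem?_eq_getElem (by rw [ht.len]; exact this)⟩

theorem HeapTy.append {T : List (L × CGTy L)} {h : Heap} (ht : HeapTy T h) {v : Exp} {l : L}
    {τ : CGTy L} (hv : CGVal v) (h1 : UTy T v (.labeled l τ)) :
    HeapTy (T ++ [(l, τ)]) (h ++ [v]) := by
  refine ⟨by simp [ht.len], ?_, ?_⟩
  · intro x hx
    rcases List.mem_append.1 hx with hx | hx
    · exact ht.val x hx
    · rw [List.mem_singleton.1 hx]; exact hv
  · intro n w l' t hw hT
    rcases Nat.lt_or_ge n h.length with hn | hn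
    · rw [List.getElem?_append_left hn] at hw
      rw [List.getElem?_append_left (ht.len ▸ hn)] at hT
      exact (ht.typ n w l' t hw hT).mono (List.prefix_append _ _)
    · have hlt := (List.getElem?_eq_some_iff.1 hw).1
      have hn' : n = h.length := by simp at hlt; omega
      subst hn'
      simp only [List.getElem?_concat_length, Option.some.injEq] at hw
      rw [ht.len] at hT
      simp only [List.getElem?_concat_length, Option.some.injEq, Prod.mk.injEq] at hT
      obtain ⟨rfl, rfl⟩ := hT
      subst hw
      exact h1.mono (List.prefix_append _ _)

theorem HeapTy.set {T : List (L × CGTy L)} {h : Heap} (ht : HeapTy T h) {v : Exp} {l : L}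
    {τ : CGTy L} {n : ℕ} (hn : T[n]? = some (l, τ)) (hv : CGVal v)
    (h1 : UTy T v (.labeled l τ)) : HeapTy T (h.set n v) := by
  refine ⟨by simp [ht.len], ?_, ?_⟩
  · intro x hx
    rcases List.mem_or_eq_of_mem_set hx with hx | rfl
    · exact ht.val x hx
    · exact hv
  · intro m w l' t hw hT
    by_cases hmn : n = m
    · subst hmn
      rw [hn] at hT
      simp only [Option.some.injEq, Prod.mk.injEq] at hT
      obtain ⟨rfl, rfl⟩ := hT
      obtain ⟨u, hu⟩ := ht.get hn
      rw [List.getElem?_set_self (List.getElem?_eq_some_iff.1 hu).1] at hw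
      cases hw
      exact h1
    · rw [List.getElem?_set_ne hmn] at hw
      exact ht.typ m w l' t hw hT

/-- Type preservation and confinement for one run: a computation with pc-label `l1` leaves every
location whose label is not above `l1` untouched. -/
theorem force_unary {h h' : Heap} {e v : Exp} (hf : CGForce h e h' v) :
    ∀ {T : List (L × CGTy L)} {l1 l2 : L} {τ : CGTy L}, HeapTy T h → UTy T e (.monad l1 l2 τ) →
      ∃ T', T <+: T' ∧ HeapTy T' h' ∧ UTy T' v τ ∧
        ∀ (n : ℕ) l t, T[n]? = some (l, t) → ¬ l1 ≤ l → h'[n]? = h[n]? := by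
  induction hf with
  | ret p1 p2 =>
    intro T l1 l2 τ ht hty
    cases Rel.pure p1 hty p1 with
    | ret a s =>
      cases s with
      | monad s1 s2 s3 =>
        exact ⟨T, List.prefix_rfl, ht, (Rel.pure p2 a p2).sub s3, fun _ _ _ _ _ => rfl⟩
  | bind p1 f1 f2 ih1 ih2 =>
    intro T l1 l2 τ ht hty
    cases Rel.pure p1 hty p1 with
    | bind a b c1 c2 c3 c4 s =>
      cases s with
      | monad s1 s2 s3 =>
        obtain ⟨T1, hT1, ht1, hv1, hc1⟩ := ih1 ht a
        have hb := Rel.mono (S' := fun n n' l t => n = n' ∧ T1[n]? = some (l, t))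
          (Q' := fun _ _ _ _ => False) b (fun _ _ _ _ h => ⟨h.1, prefix_get hT1 h.2⟩)
          (fun _ _ _ _ h => h) []
        obtain ⟨T2, hT2, ht2, hv2, hc2⟩ := ih2 ht1 (Rel.subst hb hv1)
        refine ⟨T2, hT1.trans hT2, ht2, hv2.sub s3, fun n l t hn hl => ?_⟩
        rw [hc2 n l t (prefix_get hT1 hn) (fun hle => hl ((s1.trans c2).trans hle)),
          hc1 n l t hn (fun hle => hl ((s1.trans c1).trans hle))]
  | unlabel p1 p2 =>
    intro T l1 l2 τ ht hty
    cases Rel.pure p1 hty p1 with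
    | unlabel a s =>
      cases s with
      | monad s1 s2 s3 =>
        cases Rel.pure p2 a p2 with
        | label b t =>
          cases t with
          | labeled t1 t2 =>
            exact ⟨T, List.prefix_rfl, ht, b.sub (sub_trans t1 s3), fun _ _ _ _ _ => rfl⟩
        | high b => exact b.elim
  | toLabeled p1 f ih =>
    intro T l1 l2 τ ht hty
    cases Rel.pure p1 hty p1 with
    | toLabeled a s =>
      cases s with
      | monad s1 s2 s3 =>
        obtain ⟨T1, hT1, ht1, hv1, hc1⟩ := ih ht a
        exact ⟨T1, hT1, ht1, .label hv1 s3,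
          fun n l t hn hl => hc1 n l t hn (fun hle => hl (s1.trans hle))⟩
  | @new e e0 v h p1 p2 =>
    intro T l1 l2 τ ht hty
    cases Rel.pure p1 hty p1 with
    | @new _ _ _ l' t' _ a s =>
      cases s with
      | monad s1 s2 s3 =>
        refine ⟨T ++ [(l', t')], List.prefix_append _ _,
          ht.append (pure_val p2) (Rel.pure p2 a p2), .loc ⟨rfl, ?_⟩ s3, fun n l t hn hl => ?_⟩
        · rw [ht.len]; simp
        · rw [List.getElem?_append_left]
          rw [ht.len]; exact (List.getElem?_eq_some_iff.1 hn).1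
  | deref p1 p2 p3 =>
    intro T l1 l2 τ ht hty
    cases Rel.pure p1 hty p1 with
    | deref a s =>
      cases s with
      | monad s1 s2 s3 =>
        cases Rel.pure p2 a p2 with
        | loc b t =>
          cases t
          exact ⟨T, List.prefix_rfl, ht, Rel.sub (ht.typ _ _ _ _ p3 b.2) s3,
            fun _ _ _ _ _ => rfl⟩
  | assign p1 p2 p3 =>
    intro T l1 l2 τ ht hty
    cases Rel.pure p1 hty p1 with
    | assign a b s =>
      cases s with
      | monad s1 s2 s3 =>
        cases Rel.pure p2 a p2 with
        | loc c t =>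
          cases t
          refine ⟨T, List.prefix_rfl, ht.set c.2 (pure_val p3) (Rel.pure p3 b p3), .unit s3,
            fun n l t hn hl => List.getElem?_set_ne ?_⟩
          rintro rfl
          rw [c.2] at hn
          cases hn
          exact hl s1

/-! ### Two runs -/

/-- Indistinguishability of two closed runtime expressions for an observer at level `obs`, over
store typings `T₁`, `T₂` and a correspondence `β` of locations. At labels not below `obs`, any two
well-typed labeled values are indistinguishable. -/
def BTy (obs : L) (T₁ T₂ : List (L × CGTy L)) (β : ℕ → ℕ → Prop)
    (Γ : List (CGTy L)) (e₁ e₂ : Exp) (τ : CGTy L) : Prop :=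
  Rel (fun n₁ n₂ l t => β n₁ n₂ ∧ T₁[n₁]? = some (l, t) ∧ T₂[n₂]? = some (l, t))
    (fun w₁ w₂ l t => ¬ l ≤ obs ∧ UTy T₁ w₁ t ∧ UTy T₂ w₂ t) Γ e₁ e₂ τ

theorem BTy.mono {obs : L} {T₁ T₂ T₁' T₂' : List (L × CGTy L)} {β β' : ℕ → ℕ → Prop}
    {Γ : List (CGTy L)} {e₁ e₂ : Exp} {τ : CGTy L} (h : BTy obs T₁ T₂ β Γ e₁ e₂ τ)
    (h1 : T₁ <+: T₁') (h2 : T₂ <+: T₂') (hβ : ∀ n m, β n m → β' n m) :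
    BTy obs T₁' T₂' β' Γ e₁ e₂ τ := by
  have := Rel.mono
    (S' := fun n₁ n₂ l t => β' n₁ n₂ ∧ T₁'[n₁]? = some (l, t) ∧ T₂'[n₂]? = some (l, t))
    (Q' := fun w₁ w₂ l t => ¬ l ≤ obs ∧ UTy T₁' w₁ t ∧ UTy T₂' w₂ t) h
    (fun _ _ _ _ h => ⟨hβ _ _ h.1, prefix_get h1 h.2.1, prefix_get h2 h.2.2⟩)
    (fun _ _ _ _ h => ⟨h.1, h.2.1.mono h1, h.2.2.mono h2⟩) []
  rw [List.append_nil] at this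
  exact this

theorem BTy.left {obs : L} {T₁ T₂ : List (L × CGTy L)} {β : ℕ → ℕ → Prop}
    {e₁ e₂ : Exp} {τ : CGTy L} (h : BTy obs T₁ T₂ β [] e₁ e₂ τ) : UTy T₁ e₁ τ :=
  Rel.left h (fun _ _ _ _ h => ⟨rfl, h.2.1⟩) (fun _ _ _ _ h => h.2.1)

theorem BTy.right {obs : L} {T₁ T₂ : List (L × CGTy L)} {β : ℕ → ℕ → Prop}
    {e₁ e₂ : Exp} {τ : CGTy L} (h : BTy obs T₁ T₂ β [] e₁ e₂ τ) : UTy T₂ e₂ τ :=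
  Rel.left (Rel.symm h) (fun _ _ _ _ h => ⟨rfl, h.2.2⟩) (fun _ _ _ _ h => h.2.2)

/-- The continuation of a computation is typed in a one-variable context; each of its projections
accepts any argument that is well typed in that run. -/
theorem BTy.left_subst {obs : L} {T₁ T₂ : List (L × CGTy L)} {β : ℕ → ℕ → Prop}
    {e₁ e₂ a : Exp} {τ σ : CGTy L} (h : BTy obs T₁ T₂ β [σ] e₁ e₂ τ) (ha : UTy T₁ a σ) :
    UTy T₁ (e₁.subst a 0) τ :=
  Rel.subst (Rel.left h (fun _ _ _ _ h => ⟨rfl, h.2.1⟩) (fun _ _ _ _ h => h.2.1)) ha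

theorem BTy.right_subst {obs : L} {T₁ T₂ : List (L × CGTy L)} {β : ℕ → ℕ → Prop}
    {e₁ e₂ a : Exp} {τ σ : CGTy L} (h : BTy obs T₁ T₂ β [σ] e₁ e₂ τ) (ha : UTy T₂ a σ) :
    UTy T₂ (e₂.subst a 0) τ :=
  Rel.subst (Rel.left (Rel.symm h) (fun _ _ _ _ h => ⟨rfl, h.2.2⟩) (fun _ _ _ _ h => h.2.2)) ha

theorem UTy.closed {T : List (L × CGTy L)} {e : Exp} {τ : CGTy L} (h : UTy T e τ) : Closed e :=
  Rel.closed_left h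

/-- Labeled values at a label not below the observer are always indistinguishable. -/
theorem bty_high {obs : L} {T₁ T₂ : List (L × CGTy L)} {β : ℕ → ℕ → Prop} {w₁ w₂ : Exp} {l : L}
    {τ : CGTy L} (hl : ¬ l ≤ obs) (v1 : CGVal w₁) (v2 : CGVal w₂) (h1 : UTy T₁ w₁ τ)
    (h2 : UTy T₂ w₂ τ) : BTy obs T₁ T₂ β [] (.label w₁) (.label w₂) (.labeled l τ) :=
  .high ⟨hl, h1, h2⟩ v1 v2 h1.closed h2.closed (sub_refl _)

theorem bty_low {obs : L} {T₁ T₂ : List (L × CGTy L)} {β : ℕ → ℕ → Prop} {w₁ w₂ : Exp} {l : L}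
    {τ : CGTy L} (h : BTy obs T₁ T₂ β [] (.label w₁) (.label w₂) (.labeled l τ)) (hl : l ≤ obs) :
    BTy obs T₁ T₂ β [] w₁ w₂ τ := by
  unfold BTy at h
  cases h with
  | label a s => cases s with | labeled s1 s2 => exact a.sub s1
  | high a _ _ _ _ s => cases s with | labeled s1 s2 => exact absurd (s2.trans hl) a.1

theorem uty_unlabel {T : List (L × CGTy L)} {w : Exp} {l : L} {τ : CGTy L}
    (h : UTy T (.label w) (.labeled l τ)) : UTy T w τ := by
  unfold UTy at h
  cases h with
  | label a s => cases s with | labeled s1 s2 => exact a.sub s1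
  | high a => exact a.elim

/-- Indistinguishable heaps: both are well typed, and `β` is a partial bijection between locations
of equal type whose contents are indistinguishable. -/
structure HeapRel (obs : L) (T₁ T₂ : List (L × CGTy L)) (β : ℕ → ℕ → Prop)
    (h₁ h₂ : Heap) : Prop where
  ty₁ : HeapTy T₁ h₁
  ty₂ : HeapTy T₂ h₂
  inj : ∀ (n m m' : ℕ), β n m → β n m' → m = m'
  inj' : ∀ (n n' m : ℕ), β n m → β n' m → n = n'
  rel : ∀ (n m : ℕ), β n m → ∃ l t w₁ w₂, T₁[n]? = some (l, t) ∧ T₂[m]? = some (l, t) ∧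
    h₁[n]? = some w₁ ∧ h₂[m]? = some w₂ ∧ BTy obs T₁ T₂ β [] w₁ w₂ (.labeled l t)

/-- Steps of either run that leave the observable locations untouched keep the heaps
indistinguishable: unobservable locations hold labeled values, which may differ freely. -/
theorem HeapRel.confined {obs : L} {T₁ T₂ T₁' T₂' : List (L × CGTy L)} {β : ℕ → ℕ → Prop}
    {h₁ h₂ h₁' h₂' : Heap} (hr : HeapRel obs T₁ T₂ β h₁ h₂)
    (p1 : T₁ <+: T₁') (p2 : T₂ <+: T₂') (t1 : HeapTy T₁' h₁') (t2 : HeapTy T₂' h₂')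
    (c1 : ∀ (n : ℕ) l t, T₁[n]? = some (l, t) → l ≤ obs → h₁'[n]? = h₁[n]?)
    (c2 : ∀ (n : ℕ) l t, T₂[n]? = some (l, t) → l ≤ obs → h₂'[n]? = h₂[n]?) :
    HeapRel obs T₁' T₂' β h₁' h₂' := by
  refine ⟨t1, t2, hr.inj, hr.inj', fun n m hnm => ?_⟩
  obtain ⟨l, t, w1, w2, a1, a2, b1, b2, hb⟩ := hr.rel n m hnm
  by_cases hl : l ≤ obs
  · exact ⟨l, t, w1, w2, prefix_get p1 a1, prefix_get p2 a2, (c1 n l t a1 hl).trans b1,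
      (c2 m l t a2 hl).trans b2, hb.mono p1 p2 fun _ _ h => h⟩
  · have a1' := prefix_get p1 a1
    have a2' := prefix_get p2 a2
    obtain ⟨u1, hu1⟩ := t1.get a1'
    obtain ⟨u2, hu2⟩ := t2.get a2'
    refine ⟨l, t, u1, u2, a1', a2', hu1, hu2, ?_⟩
    obtain ⟨x1, rfl, vx1, tx1⟩ :=
      (t1.typ _ _ _ _ hu1 a1').labeled_inv (t1.val _ (List.mem_of_getElem? hu1))
    obtain ⟨x2, rfl, vx2, tx2⟩ :=
      (t2.typ _ _ _ _ hu2 a2').labeled_inv (t2.val _ (List.mem_of_getElem? hu2))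
    exact bty_high hl vx1 vx2 tx1 tx2

theorem HeapRel.append {obs : L} {T₁ T₂ : List (L × CGTy L)} {β : ℕ → ℕ → Prop}
    {h₁ h₂ : Heap} (hr : HeapRel obs T₁ T₂ β h₁ h₂) {v₁ v₂ : Exp} {l : L} {τ : CGTy L}
    (hv₁ : CGVal v₁) (hv₂ : CGVal v₂) (hb : BTy obs T₁ T₂ β [] v₁ v₂ (.labeled l τ)) :
    HeapRel obs (T₁ ++ [(l, τ)]) (T₂ ++ [(l, τ)])
      (fun n m => β n m ∨ (n = h₁.length ∧ m = h₂.length)) (h₁ ++ [v₁]) (h₂ ++ [v₂]) := by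
  have dom : ∀ n m, β n m → n < h₁.length ∧ m < h₂.length := by
    intro n m hnm
    obtain ⟨_, _, _, _, _, _, b1, b2, _⟩ := hr.rel n m hnm
    exact ⟨(List.getElem?_eq_some_iff.1 b1).1, (List.getElem?_eq_some_iff.1 b2).1⟩
  have p1 : T₁ <+: T₁ ++ [(l, τ)] := List.prefix_append _ _
  have p2 : T₂ <+: T₂ ++ [(l, τ)] := List.prefix_append _ _
  refine ⟨hr.ty₁.append hv₁ hb.left, hr.ty₂.append hv₂ hb.right, ?_, ?_, ?_⟩
  · rintro n m m' (h | ⟨h, h'⟩) (k | ⟨k, k'⟩)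
    · exact hr.inj _ _ _ h k
    · have := (dom _ _ h).1; omega
    · have := (dom _ _ k).1; omega
    · omega
  · rintro n n' m (h | ⟨h, h'⟩) (k | ⟨k, k'⟩)
    · exact hr.inj' _ _ _ h k
    · have := (dom _ _ h).2; omega
    · have := (dom _ _ k).2; omega
    · omega
  · rintro n m (h | ⟨rfl, rfl⟩)
    · obtain ⟨l', t', w1, w2, a1, a2, b1, b2, hb'⟩ := hr.rel n m h
      exact ⟨l', t', w1, w2, prefix_get p1 a1, prefix_get p2 a2,
        prefix_get (List.prefix_append _ _) b1, prefix_get (List.prefix_append _ _) b2,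
        hb'.mono p1 p2 fun _ _ h => Or.inl h⟩
    · refine ⟨l, τ, v₁, v₂, ?_, ?_, by simp, by simp, hb.mono p1 p2 fun _ _ h => Or.inl h⟩
      · rw [hr.ty₁.len]; simp
      · rw [hr.ty₂.len]; simp

theorem HeapRel.set {obs : L} {T₁ T₂ : List (L × CGTy L)} {β : ℕ → ℕ → Prop}
    {h₁ h₂ : Heap} (hr : HeapRel obs T₁ T₂ β h₁ h₂) {v₁ v₂ : Exp} {l : L} {τ : CGTy L} {n m : ℕ}
    (hv₁ : CGVal v₁) (hv₂ : CGVal v₂) (hb : BTy obs T₁ T₂ β [] v₁ v₂ (.labeled l τ))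
    (hβ : β n m) (hn : T₁[n]? = some (l, τ)) (hm : T₂[m]? = some (l, τ)) :
    HeapRel obs T₁ T₂ β (h₁.set n v₁) (h₂.set m v₂) := by
  refine ⟨hr.ty₁.set hn hv₁ hb.left, hr.ty₂.set hm hv₂ hb.right, hr.inj, hr.inj', ?_⟩
  intro n' m' h
  obtain ⟨l', t', w1, w2, a1, a2, b1, b2, hb'⟩ := hr.rel n' m' h
  by_cases hnn : n = n'
  · subst hnn
    obtain rfl := hr.inj _ _ _ hβ h
    refine ⟨l, τ, v₁, v₂, hn, hm, ?_, ?_, hb⟩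
    · exact List.getElem?_set_self (List.getElem?_eq_some_iff.1 b1).1
    · exact List.getElem?_set_self (List.getElem?_eq_some_iff.1 b2).1
  · have hmm : m ≠ m' := by
      rintro rfl
      exact hnn (hr.inj' _ _ _ hβ h)
    refine ⟨l', t', w1, w2, a1, a2, ?_, ?_, hb'⟩
    · rw [List.getElem?_set_ne hnn]; exact b1
    · rw [List.getElem?_set_ne hmm]; exact b2

/-- Two terminating runs of indistinguishable computations from indistinguishable heaps end in
indistinguishable heaps, and the results, labeled with the taint `l2`, are indistinguishable. -/
theorem force_binary {obs : L} {h₁ h₁' : Heap} {e₁ v₁ : Exp} (hf : CGForce h₁ e₁ h₁' v₁) :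
    ∀ {h₂ h₂' : Heap} {e₂ v₂ : Exp}, CGForce h₂ e₂ h₂' v₂ →
    ∀ {T₁ T₂ : List (L × CGTy L)} {β : ℕ → ℕ → Prop} {l1 l2 : L} {τ : CGTy L},
      HeapRel obs T₁ T₂ β h₁ h₂ → BTy obs T₁ T₂ β [] e₁ e₂ (.monad l1 l2 τ) →
      ∃ T₁' T₂' β', T₁ <+: T₁' ∧ T₂ <+: T₂' ∧ (∀ n m, β n m → β' n m) ∧
        HeapRel obs T₁' T₂' β' h₁' h₂' ∧
        BTy obs T₁' T₂' β' [] (.label v₁) (.label v₂) (.labeled l2 τ) := by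
  induction hf with
  | ret p1 p2 =>
    intro h₂ h₂' e₂ v₂ hf2 T₁ T₂ β l1 l2 τ hr hty
    cases hf2 with
    | ret q1 q2 =>
      cases Rel.pure p1 hty q1 with
      | ret a s =>
        cases s with
        | monad s1 s2 s3 =>
          exact ⟨T₁, T₂, β, List.prefix_rfl, List.prefix_rfl, fun _ _ h => h, hr,
            .label ((Rel.pure p2 a q2).sub s3) (sub_refl _)⟩
    | bind q1 | unlabel q1 | toLabeled q1 | new q1 | deref q1 | assign q1 =>
      cases Rel.pure p1 hty q1
  | bind p1 f1 f2 ih1 ih2 =>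
    intro h₂ h₂' e₂ v₂ hf2 T₁ T₂ β l1 l2 τ hr hty
    cases hf2 with
    | bind q1 g1 g2 =>
      cases Rel.pure p1 hty q1 with
      | @bind _ _ _ _ _ k k1 k2 k3 k4 σ σ' _ a b c1 c2 c3 c4 s =>
        cases s with
        | monad s1 s2 s3 =>
          obtain ⟨U₁, U₂, β1, u1, u2, hβ1, hr1, hv⟩ := ih1 g1 hr a
          have hb : BTy obs U₁ U₂ β1 [σ] _ _ _ := BTy.mono b u1 u2 hβ1
          -- If the taint `k2` is not below `obs`, neither is the pc-label `k3` of the continuation.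
          by_cases hk : k2 ≤ obs
          · obtain ⟨V₁, V₂, β2, w1, w2, hβ2, hr2, hv2⟩ := ih2 g2 hr1 (Rel.subst hb (bty_low hv hk))
            exact ⟨V₁, V₂, β2, u1.trans w1, u2.trans w2, fun _ _ h => hβ2 _ _ (hβ1 _ _ h), hr2,
              hv2.sub (.labeled s3 s2)⟩
          · have hk3 : ∀ x : L, x ≤ obs → ¬ k3 ≤ x := fun x hx h => hk ((c3.trans h).trans hx)
            obtain ⟨V₁, w1, y1, z1, d1⟩ :=
              force_unary f2 hr1.ty₁ (hb.left_subst (uty_unlabel hv.left))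
            obtain ⟨V₂, w2, y2, z2, d2⟩ :=
              force_unary g2 hr1.ty₂ (hb.right_subst (uty_unlabel hv.right))
            exact ⟨V₁, V₂, β1, u1.trans w1, u2.trans w2, hβ1,
              hr1.confined w1 w2 y1 y2 (fun n l t hn hl => d1 n l t hn (hk3 l hl))
                (fun n l t hn hl => d2 n l t hn (hk3 l hl)),
              bty_high (fun h => hk ((c4.trans s2).trans h)) (force_val f2 hr1.ty₁.val).2
                (force_val g2 hr1.ty₂.val).2 (z1.sub s3) (z2.sub s3)⟩
    | ret q1 | unlabel q1 | toLabeled q1 | new q1 | deref q1 | assign q1 =>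
      cases Rel.pure p1 hty q1
  | unlabel p1 p2 =>
    intro h₂ h₂' e₂ v₂ hf2 T₁ T₂ β l1 l2 τ hr hty
    cases hf2 with
    | unlabel q1 q2 =>
      cases Rel.pure p1 hty q1 with
      | unlabel a s =>
        cases s with
        | monad s1 s2 s3 =>
          exact ⟨T₁, T₂, β, List.prefix_rfl, List.prefix_rfl, fun _ _ h => h, hr,
            (Rel.pure p2 a q2).sub (.labeled s3 s2)⟩
    | ret q1 | bind q1 | toLabeled q1 | new q1 | deref q1 | assign q1 =>
      cases Rel.pure p1 hty q1
  | toLabeled p1 f ih =>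
    intro h₂ h₂' e₂ v₂ hf2 T₁ T₂ β l1 l2 τ hr hty
    cases hf2 with
    | toLabeled q1 g =>
      cases Rel.pure p1 hty q1 with
      | toLabeled a s =>
        cases s with
        | monad s1 s2 s3 =>
          obtain ⟨U₁, U₂, β1, u1, u2, hβ1, hr1, hv⟩ := ih g hr a
          exact ⟨U₁, U₂, β1, u1, u2, hβ1, hr1, .label (hv.sub s3) (sub_refl _)⟩
    | ret q1 | bind q1 | unlabel q1 | new q1 | deref q1 | assign q1 =>
      cases Rel.pure p1 hty q1
  | new p1 p2 =>
    intro h₂ h₂' e₂ v₂ hf2 T₁ T₂ β l1 l2 τ hr hty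
    cases hf2 with
    | new q1 q2 =>
      cases Rel.pure p1 hty q1 with
      | new a s =>
        cases s with
        | monad s1 s2 s3 =>
          refine ⟨_, _, _, List.prefix_append _ _, List.prefix_append _ _, fun _ _ h => Or.inl h,
            hr.append (pure_val p2) (pure_val q2) (Rel.pure p2 a q2),
            .label (.loc ⟨Or.inr ⟨rfl, rfl⟩, ?_, ?_⟩ s3) (sub_refl _)⟩
          · rw [hr.ty₁.len]; simp
          · rw [hr.ty₂.len]; simp
    | ret q1 | bind q1 | unlabel q1 | toLabeled q1 | deref q1 | assign q1 =>
      cases Rel.pure p1 hty q1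
  | deref p1 p2 p3 =>
    intro h₂ h₂' e₂ v₂ hf2 T₁ T₂ β l1 l2 τ hr hty
    cases hf2 with
    | deref q1 q2 q3 =>
      cases Rel.pure p1 hty q1 with
      | deref a s =>
        cases s with
        | monad s1 s2 s3 =>
          cases Rel.pure p2 a q2 with
          | loc b t =>
            cases t
            obtain ⟨l', t', w1, w2, a1, a2, b1, b2, hb⟩ := hr.rel _ _ b.1
            rw [b.2.1] at a1
            rw [p3] at b1
            rw [q3] at b2
            cases a1
            cases b1
            cases b2
            exact ⟨T₁, T₂, β, List.prefix_rfl, List.prefix_rfl, fun _ _ h => h, hr,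
              .label (hb.sub s3) (sub_refl _)⟩
    | ret q1 | bind q1 | unlabel q1 | toLabeled q1 | new q1 | assign q1 =>
      cases Rel.pure p1 hty q1
  | assign p1 p2 p3 =>
    intro h₂ h₂' e₂ v₂ hf2 T₁ T₂ β l1 l2 τ hr hty
    cases hf2 with
    | assign q1 q2 q3 =>
      cases Rel.pure p1 hty q1 with
      | assign a b s =>
        cases s with
        | monad s1 s2 s3 =>
          cases Rel.pure p2 a q2 with
          | loc c t =>
            cases t
            exact ⟨T₁, T₂, β, List.prefix_rfl, List.prefix_rfl, fun _ _ h => h,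
              hr.set (pure_val p3) (pure_val q3) (Rel.pure p3 b q3) c.1 c.2.1 c.2.2,
              .label (.unit s3) (sub_refl _)⟩
    | ret q1 | bind q1 | unlabel q1 | toLabeled q1 | new q1 | deref q1 =>
      cases Rel.pure p1 hty q1

/-- Indistinguishable boolean values are equal. -/
theorem bool_eq {S : ℕ → ℕ → L → CGTy L → Prop} {Q : Exp → Exp → L → CGTy L → Prop}
    {v₁ v₂ : Exp} (h : Rel S Q [] v₁ v₂ .bool) (hv : CGVal v₁) : v₁ = v₂ := by
  cases hv <;> cases h <;> first | rfl | (rename_i s; cases s)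

end Worlds

end CGNI

/-! ## STATEMENT 0: Noninterference for CG -/

theorem cg_noninterference
    {L : Type} [Lattice L] [BoundedOrder L]
    (li l l1 : L) (τ : CGTy L) (e v1 v2 : Exp)
    (hflow : ¬ li ≤ l)
    (hty : CGTyped [CGTy.labeled li τ] e (CGTy.monad l1 l CGTy.bool))
    (hv1 : CGVal v1) (hv1ty : CGTyped ([] : List (CGTy L)) v1 (CGTy.labeled li τ))
    (hv2 : CGVal v2) (hv2ty : CGTyped ([] : List (CGTy L)) v2 (CGTy.labeled li τ))
    (h1 h2 : Heap) (r1 r2 : Exp)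
    (hrun1 : CGForce [] (e.subst v1 0) h1 r1)
    (hrun2 : CGForce [] (e.subst v2 0) h2 r2) :
    r1 = r2 := by
  obtain ⟨w1, rfl, vw1, tw1⟩ :=
    CGNI.UTy.labeled_inv (T := []) (CGNI.rel_of_typed hv1ty) hv1
  obtain ⟨w2, rfl, vw2, tw2⟩ :=
    CGNI.UTy.labeled_inv (T := []) (CGNI.rel_of_typed hv2ty) hv2
  have ht : CGNI.HeapTy ([] : List (L × CGTy L)) [] :=
    ⟨rfl, by simp, fun n w l t h => by simp at h⟩
  have hr : CGNI.HeapRel l [] [] (fun _ _ => False) [] [] :=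
    ⟨ht, ht, fun _ _ _ h => h.elim, fun _ _ _ h => h.elim, fun _ _ h => h.elim⟩
  obtain ⟨_, _, _, -, -, -, -, hb⟩ := CGNI.force_binary hrun1 hrun2 hr
    (CGNI.Rel.subst (CGNI.rel_of_typed hty) (CGNI.bty_high hflow vw1 vw2 tw1 tw2))
  exact CGNI.bool_eq (CGNI.bty_low hb le_rfl) (CGNI.force_val hrun1 (by simp)).2
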